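/- Let G₁ be an r₁-regular graph on n₁ vertices and m₁ edges, and let G₂ be an arbitrary graph on n₂ vertices. Then for each α ∈ [0,1], the characteristic polynomial of A_α(G₁⟨e⟩G₂), where G₁⟨e⟩G₂ is the R-edge join, satisfies ψ_{A_α(G₁⟨e⟩G₂)}(x) = (x−2α−αn₂)^{m₁−n₁} · ψ_{A_α(G₂)}(x−αm₁) · ∏_{i=2}^{n₁} ( x² − (2α+αr₁+αn₂+λ_i(A_α(G₁)))x + α²r₁n₂ + 3αr₁ − r₁ − (1−3α−αn₂)λ_i(A_α(G₁)) ) · ( x² − (2α+αr₁+αn₂+r₁)x + α²r₁n₂ + 6αr₁ − 2r₁ + αr₁n₂ − m₁(1−α)²(x−αr₁−r₁)·Γ_{A_α(G₂)}(x−αm₁) ), where λ₁(A_α(G₁)) ≥ ⋯ ≥ λ_{n₁}(A_α(G₁)) are the A_α-eigenvalues of G₁. -/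

import Mathlib

open Matrix Polynomial
open scoped Classical

noncomputable section

/-- `A_α(G) = α·D(G) + (1-α)·A(G)`, where `D(G)` is the diagonal degree matrix and
`A(G)` the adjacency matrix. -/
def Aalpha {V : Type*} [Fintype V] (G : SimpleGraph V) (α : ℝ) : Matrix V V ℝ :=
  α • Matrix.diagonal (fun v => (G.degree v : ℝ)) + (1 - α) • G.adjMatrix ℝ

/-- The `M`-coronal `Γ_M(x) = 1ᵀ (xI − M)⁻¹ 1`, i.e. the sum of the entries of
`(xI − M)⁻¹`. -/
def coronal {n : Type*} [Fintype n] (M : Matrix n n ℝ) (x : ℝ) : ℝ :=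
  ∑ i, ∑ j, (x • (1 : Matrix n n ℝ) - M)⁻¹ i j

/-- The `R`-edge join `G₁⟨e⟩G₂`: take the `R`-graph `R(G₁)` (for each edge of `G₁` a
new vertex joined to both of its endpoints) together with `G₂`, and join every inserted
vertex of `R(G₁)` with every vertex of `G₂`. -/
def rEdgeJoin {V₁ V₂ : Type*} (G₁ : SimpleGraph V₁) (G₂ : SimpleGraph V₂) :
    SimpleGraph (V₁ ⊕ (↥G₁.edgeSet ⊕ V₂)) :=
  SimpleGraph.fromRel fun a b =>
    match a, b with
    | Sum.inl v, Sum.inl w => G₁.Adj v w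
    | Sum.inl v, Sum.inr (Sum.inl e) => v ∈ (e : Sym2 V₁)
    | Sum.inr (Sum.inl _), Sum.inr (Sum.inr _) => True
    | Sum.inr (Sum.inr u), Sum.inr (Sum.inr w) => G₂.Adj u w
    | _, _ => False

/-!
The Schur complement of the block of `V₂` replaces `G₂` by its coronal times the all-ones matrix
`J` on the edges of `G₁`. Let `R` be the vertex-edge incidence matrix of `G₁`. Since `Rᵀ1 = 2·1`,
the columns of `J` lie in the column space of `Rᵀ`, and a column operation turns the edge block
into `c·I`, where `c = x - 2α - αn₂`. As `(1-α)RRᵀ = A_α(G₁) + (1-2α)D(G₁)` and `G₁` is regular, a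
second Schur complement leaves the determinant of a linear polynomial in `A_α(G₁)` plus a multiple
of the all-ones matrix on the vertices. Regularity also makes the all-ones vector an eigenvector of
`A_α(G₁)` for `r₁`, so that this rank-one term moves only the eigenvalue `r₁`.
-/

section Matrix

lemma fromBlocks_sub_fromBlocks {l m n o R : Type*} [AddGroup R] (A A' : Matrix n l R)
    (B B' : Matrix n m R) (C C' : Matrix o l R) (D D' : Matrix o m R) :
    fromBlocks A B C D - fromBlocks A' B' C' D' =
      fromBlocks (A - A') (B - B') (C - C') (D - D') := by
  ext (i | i) (j | j) <;> rfl

variable {m n R K : Type*} [Fintype m] [DecidableEq m] [Fintype n] [DecidableEq n]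

lemma det_fromBlocks_vecMulVec [CommRing R] (A : Matrix m m R) (u u' : m → R) (v v' : n → R)
    (D : Matrix n n R) (hD : IsUnit D.det) :
    (fromBlocks A (vecMulVec u v) (vecMulVec v' u') D).det =
      D.det * (A - (v ⬝ᵥ D⁻¹ *ᵥ v') • vecMulVec u u').det := by
  have := invertibleOfIsUnitDet D hD
  rw [det_fromBlocks₂₂, invOf_eq_nonsing_inv, vecMulVec_mul, vecMulVec_mul_vecMulVec,
    vecMulVec_smul, dotProduct_mulVec]

lemma det_fromBlocks_smul_one_add_mul [Field K] (A : Matrix m m K) (B : Matrix m n K)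
    (C : Matrix n m K) {c : K} (hc : c ≠ 0) (Y : Matrix m n K) :
    (fromBlocks A B C (c • 1 + C * Y)).det =
      c ^ Fintype.card n * (A - c⁻¹ • ((B - A * Y) * C)).det := by
  have hcol : fromBlocks A B C (c • 1 + C * Y) * fromBlocks 1 (-Y) 0 1 =
      fromBlocks A (B - A * Y) C (c • 1) := by
    simp [fromBlocks_multiply, neg_add_eq_sub]
  have hdet := congrArg det hcol
  rw [det_mul, det_fromBlocks_zero₂₁, det_one, det_one, mul_one, mul_one] at hdet
  let _ : Invertible (c • (1 : Matrix n n K)) :=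
    ⟨c⁻¹ • 1, by simp [smul_smul, hc], by simp [smul_smul, hc]⟩
  have hinv : ⅟(c • (1 : Matrix n n K)) = c⁻¹ • 1 := rfl
  simp [hdet, det_fromBlocks₂₂, hinv]

lemma det_fromBlocks_smul_one_add_vecMulVec [Field K] {A : Matrix m m K} (B : Matrix m n K)
    {C : Matrix n m K} {c p : K} (hc : c ≠ 0) {u : m → K} {w : n → K} (hA : A *ᵥ u = p • u)
    (hC : C *ᵥ u = w) (v : n → K) :
    (fromBlocks A B C (c • 1 + vecMulVec w v)).det =
      c ^ Fintype.card n * (A - c⁻¹ • (B * C - p • vecMulVec u (v ᵥ* C))).det := by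
  rw [← hC, ← mul_vecMulVec, det_fromBlocks_smul_one_add_mul A B C hc, mul_vecMulVec, hA,
    smul_vecMulVec, Matrix.sub_mul, smul_mul, vecMulVec_mul]

lemma mul_det_add_vecMulVec_of_mulVec_eq_smul [CommRing R] {A : Matrix n n R} {u : n → R} {q : R}
    (hA : A *ᵥ u = q • u) (v : n → R) :
    q * (A + vecMulVec u v).det = (q + v ⬝ᵥ u) * A.det := by
  have hmul : fromBlocks A (replicateCol Unit u) (-replicateRow Unit v) 1 *
      fromBlocks 1 (-replicateCol Unit u) 0 (q • 1) =
      fromBlocks A 0 (-replicateRow Unit v) ((q + v ⬝ᵥ u) • 1) := by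
    rw [fromBlocks_multiply]
    congr 1
    · simp
    · ext i -
      simpa [mul_apply, mulVec, dotProduct, mul_comm, neg_add_eq_zero] using congrFun hA i
    · simp
    · ext
      simp [mul_apply, dotProduct, add_comm]
  have hdet := congrArg det hmul
  rw [det_mul, det_fromBlocks_one₂₂, det_fromBlocks_zero₂₁, det_fromBlocks_zero₁₂,
    Matrix.mul_neg, sub_neg_eq_add, ← vecMulVec_eq] at hdet
  simpa [mul_comm] using hdet

lemma X_sub_C_mul_charpoly_add_vecMulVec [CommRing R] {A : Matrix n n R} {u : n → R} {q : R}
    (hA : A *ᵥ u = q • u) (v : n → R) :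
    (X - C q) * (A + vecMulVec u v).charpoly = (X - C (q + v ⬝ᵥ u)) * A.charpoly := by
  have hchar : A.charmatrix *ᵥ (C ∘ u) = (X - C q) • (C ∘ u) := by
    ext1 i
    have hi := (RingHom.map_mulVec C A u i).symm
    rw [hA] at hi
    simp [charmatrix, sub_mulVec, hi, sub_mul]
  have hadd : (A + vecMulVec u v).charmatrix = A.charmatrix + vecMulVec (C ∘ u) (-(C ∘ v)) := by
    ext1 i j
    simp only [charmatrix_apply, Matrix.add_apply, vecMulVec_apply, Pi.neg_apply,
      Function.comp_apply, C_add, C_mul]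
    ring
  have hq : X - C q + -(C ∘ v) ⬝ᵥ (C ∘ u) = X - C (q + v ⬝ᵥ u) := by
    rw [neg_dotProduct, C_add, RingHom.map_dotProduct]
    ring
  rw [charpoly, hadd, mul_det_add_vecMulVec_of_mulVec_eq_smul hchar, charpoly, hq]

lemma charpoly_add_vecMulVec_of_charpoly_eq_prod [CommRing R] {A : Matrix n n R} {μ : n → R}
    (hμ : A.charpoly = ∏ i, (X - C (μ i))) {u : n → R} {i₀ : n} (hu : A *ᵥ u = μ i₀ • u)
    (v : n → R) :
    (A + vecMulVec u v).charpoly =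
      (∏ i ∈ Finset.univ.erase i₀, (X - C (μ i))) * (X - C (μ i₀ + v ⬝ᵥ u)) := by
  refine (monic_X_sub_C (μ i₀)).isRegular.left ?_
  beta_reduce
  rw [X_sub_C_mul_charpoly_add_vecMulVec hu, hμ, ← Finset.mul_prod_erase _ _ (Finset.mem_univ i₀)]
  ring

lemma charpoly_smul_of_charpoly_eq_prod [Field K] [Infinite K] {A : Matrix n n K} {μ : n → K}
    (hμ : A.charpoly = ∏ i, (X - C (μ i))) (ρ : K) :
    (ρ • A).charpoly = ∏ i, (X - C (ρ * μ i)) := by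
  rcases eq_or_ne ρ 0 with rfl | hρ
  · simp [charpoly_zero]
  refine Polynomial.funext fun y => ?_
  have hscale : scalar n y - ρ • A = ρ • (scalar n (y / ρ) - A) := by
    simp [smul_sub, ← smul_one_eq_diagonal, smul_smul, mul_div_cancel₀ _ hρ]
  calc
    eval y (ρ • A).charpoly = ρ ^ Fintype.card n * eval (y / ρ) A.charpoly := by
      rw [eval_charpoly, hscale, det_smul, eval_charpoly]
    _ = ∏ i, ρ * (y / ρ - μ i) := by
      simp [hμ, eval_prod, Finset.prod_mul_distrib]
    _ = eval y (∏ i, (X - C (ρ * μ i))) := by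
      simp [eval_prod, mul_sub, mul_div_cancel₀ _ hρ]

lemma det_smul_one_sub_of_charpoly_eq_prod [Field K] [Infinite K] {A : Matrix n n K} {μ : n → K}
    (hμ : A.charpoly = ∏ i, (X - C (μ i))) {u : n → K} {i₀ : n} (hu : A *ᵥ u = μ i₀ • u)
    (v : n → K) (κ ρ : K) :
    (κ • 1 - (ρ • A + vecMulVec u v)).det =
      (∏ i ∈ Finset.univ.erase i₀, (κ - ρ * μ i)) * (κ - (ρ * μ i₀ + v ⬝ᵥ u)) := by
  have hρ : (ρ • A) *ᵥ u = (ρ * μ i₀) • u := by rw [smul_mulVec, hu, smul_smul]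
  rw [smul_one_eq_diagonal, ← scalar_apply, ← eval_charpoly,
    charpoly_add_vecMulVec_of_charpoly_eq_prod (charpoly_smul_of_charpoly_eq_prod hμ ρ) hρ]
  simp [eval_prod]

lemma isRoot_charpoly_of_mulVec_eq_smul [CommRing R] [IsDomain R] {A : Matrix n n R} {u : n → R}
    {q : R} (hu : u ≠ 0) (hA : A *ᵥ u = q • u) : A.charpoly.IsRoot q := by
  rw [IsRoot.def, eval_charpoly]
  exact exists_mulVec_eq_zero_iff.1 ⟨u, hu, by
    rw [sub_mulVec, hA, scalar_apply, ← smul_one_eq_diagonal, smul_mulVec, one_mulVec, sub_self]⟩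

lemma le_of_isRoot_charpoly_of_nonneg {A : Matrix n n ℝ} (hA : ∀ i j, 0 ≤ A i j) {q t : ℝ}
    (hsum : ∀ i, ∑ j, A i j ≤ q) (ht : A.charpoly.IsRoot t) : t ≤ q := by
  rw [← mem_spectrum_iff_isRoot_charpoly, ← spectrum_toLin',
    ← Module.End.hasEigenvalue_iff_mem_spectrum] at ht
  obtain ⟨k, hk⟩ := eigenvalue_mem_ball ht
  simp only [Real.norm_of_nonneg (hA _ _), Metric.mem_closedBall, Real.dist_eq] at hk
  have hrow := Finset.add_sum_erase _ (A k) (Finset.mem_univ k)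
  linarith [le_abs_self (t - A k k), hsum k]

end Matrix

section IncidenceMatrix

variable {V : Type*} (G : SimpleGraph V)

/-- The vertex-edge incidence matrix of `G`. Unlike those of `SimpleGraph.incMatrix`, its columns
are indexed by the edges only, so that it is an off-diagonal block of matrices on the vertices and
edges of `G`. -/
def edgeIncMatrix : Matrix V G.edgeSet ℝ :=
  (G.incMatrix ℝ).submatrix id Subtype.val

lemma edgeIncMatrix_apply (v : V) (e : G.edgeSet) :
    edgeIncMatrix G v e = if v ∈ (e : Sym2 V) then 1 else 0 := by
  simp [edgeIncMatrix, SimpleGraph.incMatrix_apply', SimpleGraph.incidenceSet]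

variable [Fintype V]

lemma edgeIncMatrix_transpose_mulVec_one : (edgeIncMatrix G)ᵀ *ᵥ 1 = 2 := by
  ext e
  simp only [mulVec, dotProduct_one]
  exact G.sum_incMatrix_apply_of_mem_edgeSet e.2

lemma edgeIncMatrix_mulVec_one : edgeIncMatrix G *ᵥ 1 = fun v => (G.degree v : ℝ) := by
  ext v
  rw [← SimpleGraph.sum_incMatrix_apply (R := ℝ)]
  simp only [mulVec, dotProduct_one]
  refine Fintype.sum_of_injective _ Subtype.val_injective _ _ (fun e he => ?_) fun e => rfl
  exact G.incMatrix_of_notMem_incidenceSet fun h => he (by simpa using h.1)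

lemma edgeIncMatrix_mul_transpose [DecidableEq V] :
    edgeIncMatrix G * (edgeIncMatrix G)ᵀ = G.degMatrix ℝ + G.adjMatrix ℝ := by
  ext i j
  have hcols : (edgeIncMatrix G * (edgeIncMatrix G)ᵀ) i j =
      (G.incMatrix ℝ * (G.incMatrix ℝ)ᵀ) i j := by
    simp only [mul_apply, transpose_apply]
    refine Fintype.sum_of_injective _ Subtype.val_injective _ _ (fun e he => ?_) fun e => by
      simp only [edgeIncMatrix, submatrix_apply, id_eq]
      congr!
    rw [G.incMatrix_of_notMem_incidenceSet fun h => he (by simpa using h.1), zero_mul]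
  rw [hcols, SimpleGraph.incMatrix_mul_transpose]
  rcases eq_or_ne i j with rfl | hij <;> simp [SimpleGraph.degMatrix, *]

end IncidenceMatrix

section Aalpha

variable {V : Type*} [Fintype V] (G : SimpleGraph V) {r : ℕ} {α : ℝ}

lemma Aalpha_eq [DecidableEq V] (α : ℝ) :
    Aalpha G α = α • G.degMatrix ℝ + (1 - α) • G.adjMatrix ℝ := by
  unfold Aalpha SimpleGraph.degMatrix
  congr!

lemma smul_edgeIncMatrix_mul_transpose [DecidableEq V] (α : ℝ) :
    (1 - α) • (edgeIncMatrix G * (edgeIncMatrix G)ᵀ) =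
      Aalpha G α + (1 - 2 * α) • G.degMatrix ℝ := by
  rw [edgeIncMatrix_mul_transpose, Aalpha_eq]
  module

lemma Aalpha_mulVec_one (α : ℝ) : Aalpha G α *ᵥ 1 = fun v => (G.degree v : ℝ) := by
  ext v
  rw [Aalpha_eq]
  simp only [add_mulVec, smul_mulVec, Pi.add_apply, Pi.smul_apply,
    SimpleGraph.degMatrix_mulVec_apply, Pi.one_apply, mul_one, smul_eq_mul,
    SimpleGraph.adjMatrix_mulVec_apply, Finset.sum_const,
    SimpleGraph.card_neighborFinset_eq_degree, nsmul_eq_mul]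
  ring

lemma Aalpha_nonneg (hα : α ∈ Set.Icc (0 : ℝ) 1) (i j : V) : 0 ≤ Aalpha G α i j := by
  have h0 := hα.1
  have h1 := sub_nonneg.2 hα.2
  simp only [Aalpha, Matrix.add_apply, Matrix.smul_apply, diagonal_apply,
    SimpleGraph.adjMatrix_apply, smul_eq_mul]
  positivity

variable {G}

lemma Aalpha_mulVec_one_of_isRegularOfDegree (hreg : G.IsRegularOfDegree r) (α : ℝ) :
    Aalpha G α *ᵥ 1 = (r : ℝ) • 1 := by
  ext v
  simp [Aalpha_mulVec_one, hreg.degree_eq]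

lemma degMatrix_of_isRegularOfDegree [DecidableEq V] (hreg : G.IsRegularOfDegree r) :
    G.degMatrix ℝ = (r : ℝ) • 1 := by
  simp [SimpleGraph.degMatrix, hreg.degree_eq, smul_one_eq_diagonal]

lemma edgeIncMatrix_mulVec_one_of_isRegularOfDegree (hreg : G.IsRegularOfDegree r) :
    edgeIncMatrix G *ᵥ 1 = (r : ℝ) • 1 := by
  ext v
  simp [edgeIncMatrix_mulVec_one, hreg.degree_eq]

lemma apply_zero_eq_of_charpoly_Aalpha {n : ℕ} [NeZero n] {G : SimpleGraph (Fin n)}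
    (hα : α ∈ Set.Icc (0 : ℝ) 1) (hreg : G.IsRegularOfDegree r) {μ : Fin n → ℝ}
    (hμ : Antitone μ) (hμch : (Aalpha G α).charpoly = ∏ i, (X - C (μ i))) : μ 0 = r := by
  have hroot (t : ℝ) : (Aalpha G α).charpoly.IsRoot t ↔ ∃ i, t = μ i := by
    simp [hμch, eval_prod, Finset.prod_eq_zero_iff, sub_eq_zero]
  have hsum (i) : ∑ j, Aalpha G α i j ≤ r := by
    simpa [mulVec, dotProduct] using
      (congrFun (Aalpha_mulVec_one_of_isRegularOfDegree hreg α) i).le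
  obtain ⟨i, hi⟩ := (hroot r).1 <|
    isRoot_charpoly_of_mulVec_eq_smul one_ne_zero (Aalpha_mulVec_one_of_isRegularOfDegree hreg α)
  refine le_antisymm ?_ (hi.trans_le (hμ (Fin.zero_le i)))
  exact le_of_isRoot_charpoly_of_nonneg (Aalpha_nonneg G hα) hsum ((hroot _).2 ⟨0, rfl⟩)

end Aalpha

lemma coronal_eq_dotProduct {n : Type*} [Fintype n] [DecidableEq n] (M : Matrix n n ℝ) (x : ℝ) :
    coronal M x = 1 ⬝ᵥ (x • (1 : Matrix n n ℝ) - M)⁻¹ *ᵥ 1 := by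
  simp only [coronal, one_dotProduct, mulVec, dotProduct_one]
  congr!

section REdgeJoin

variable {V₁ V₂ : Type*} (G₁ : SimpleGraph V₁) (G₂ : SimpleGraph V₂)

lemma adjMatrix_rEdgeJoin_submatrix :
    ((rEdgeJoin G₁ G₂).adjMatrix ℝ).submatrix (Equiv.sumAssoc _ _ _) (Equiv.sumAssoc _ _ _) =
      fromBlocks (fromBlocks (G₁.adjMatrix ℝ) (edgeIncMatrix G₁) (edgeIncMatrix G₁)ᵀ 0)
        (vecMulVec (Sum.elim 0 1) 1) (vecMulVec 1 (Sum.elim 0 1)) (G₂.adjMatrix ℝ) := by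
  have hadj₁ {v w} : ¬v = w ∧ (G₁.Adj v w ∨ G₁.Adj w v) ↔ G₁.Adj v w := by
    rw [G₁.adj_comm w v, or_self, and_iff_right_of_imp SimpleGraph.Adj.ne]
  have hadj₂ {v w} : ¬v = w ∧ (G₂.Adj v w ∨ G₂.Adj w v) ↔ G₂.Adj v w := by
    rw [G₂.adj_comm w v, or_self, and_iff_right_of_imp SimpleGraph.Adj.ne]
  ext ((v | e) | w) ((v' | e') | w') <;>
    simp only [submatrix_apply, SimpleGraph.adjMatrix_apply] <;>
    simp [rEdgeJoin, edgeIncMatrix_apply, hadj₁, hadj₂]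

variable [Fintype V₁] [Fintype V₂]

lemma degree_rEdgeJoin_sumAssoc (a : (V₁ ⊕ G₁.edgeSet) ⊕ V₂) :
    ((rEdgeJoin G₁ G₂).degree (Equiv.sumAssoc _ _ _ a) : ℝ) =
      Sum.elim (Sum.elim (fun v => 2 * (G₁.degree v : ℝ)) fun _ => 2 + (Fintype.card V₂ : ℝ))
        (fun w => (G₂.degree w : ℝ) + (Fintype.card G₁.edgeSet : ℝ)) a := by
  have hrow : ((rEdgeJoin G₁ G₂).degree (Equiv.sumAssoc _ _ _ a) : ℝ) =
      (((rEdgeJoin G₁ G₂).adjMatrix ℝ).submatrix (Equiv.sumAssoc _ _ _)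
        (Equiv.sumAssoc _ _ _) *ᵥ 1) a := by
    simp [submatrix_mulVec_equiv]
  rw [hrow, adjMatrix_rEdgeJoin_submatrix, ← Sum.elim_one_one, fromBlocks_mulVec,
    fromBlocks_mulVec, vecMulVec_mulVec, vecMulVec_mulVec]
  rcases a with (v | e) | w
  · simp [edgeIncMatrix_mulVec_one, two_mul]
  · simp [edgeIncMatrix_transpose_mulVec_one]
  · simp [dotProduct, add_comm, -Fintype.card_ofFinset]

variable [DecidableEq V₁] [DecidableEq V₂]

lemma degMatrix_rEdgeJoin_submatrix :
    ((rEdgeJoin G₁ G₂).degMatrix ℝ).submatrix (Equiv.sumAssoc _ _ _) (Equiv.sumAssoc _ _ _) =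
      fromBlocks
        (fromBlocks ((2 : ℝ) • G₁.degMatrix ℝ) 0 0 ((2 + (Fintype.card V₂ : ℝ)) • 1)) 0 0
        (G₂.degMatrix ℝ + (Fintype.card G₁.edgeSet : ℝ) • 1) := by
  ext a b
  simp only [SimpleGraph.degMatrix, submatrix_apply, diagonal_apply,
    EmbeddingLike.apply_eq_iff_eq, degree_rEdgeJoin_sumAssoc]
  rcases a with (v | e) | w <;> rcases b with (v' | e') | w' <;>
    simp [diagonal_apply, Matrix.one_apply, ite_add_ite, -Fintype.card_ofFinset]

lemma Aalpha_rEdgeJoin_submatrix (α : ℝ) :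
    (Aalpha (rEdgeJoin G₁ G₂) α).submatrix (Equiv.sumAssoc _ _ _) (Equiv.sumAssoc _ _ _) =
      fromBlocks
        (fromBlocks (Aalpha G₁ α + α • G₁.degMatrix ℝ) ((1 - α) • edgeIncMatrix G₁)
          ((1 - α) • (edgeIncMatrix G₁)ᵀ) ((α * (2 + Fintype.card V₂)) • 1))
        (vecMulVec (Sum.elim 0 ((1 - α) • 1)) 1) (vecMulVec 1 (Sum.elim 0 ((1 - α) • 1)))
        (Aalpha G₂ α + (α * Fintype.card G₁.edgeSet) • 1) := by
  simp only [Aalpha_eq, submatrix_add, submatrix_smul, Pi.add_apply, Pi.smul_apply,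
    degMatrix_rEdgeJoin_submatrix, adjMatrix_rEdgeJoin_submatrix, fromBlocks_smul,
    fromBlocks_add, fromBlocks_inj]
  refine ⟨⟨?_, ?_, ?_, ?_⟩, ?_, ?_, ?_⟩
  · module
  · simp
  · simp
  · simp [smul_smul]
  · ext (v | e) w <;> simp [vecMulVec_apply]
  · ext w (v | e) <;> simp [vecMulVec_apply]
  · module

lemma smul_one_sub_Aalpha_rEdgeJoin_submatrix (α x : ℝ) :
    (x • 1 - Aalpha (rEdgeJoin G₁ G₂) α).submatrix (Equiv.sumAssoc _ _ _) (Equiv.sumAssoc _ _ _) =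
      fromBlocks
        (fromBlocks (x • 1 - (Aalpha G₁ α + α • G₁.degMatrix ℝ)) (-((1 - α) • edgeIncMatrix G₁))
          (-((1 - α) • (edgeIncMatrix G₁)ᵀ)) ((x - 2 * α - α * Fintype.card V₂) • 1))
        (vecMulVec (Sum.elim 0 ((α - 1) • 1)) 1) (vecMulVec 1 (Sum.elim 0 ((α - 1) • 1)))
        ((x - α * Fintype.card G₁.edgeSet) • 1 - Aalpha G₂ α) := by
  simp only [submatrix_sub, submatrix_smul, Pi.sub_apply, Pi.smul_apply, submatrix_one_equiv,
    Aalpha_rEdgeJoin_submatrix]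
  rw [← fromBlocks_one, ← fromBlocks_one, fromBlocks_smul, fromBlocks_smul,
    fromBlocks_sub_fromBlocks, fromBlocks_sub_fromBlocks, fromBlocks_inj, fromBlocks_inj]
  refine ⟨⟨rfl, ?_, ?_, ?_⟩, ?_, ?_, ?_⟩
  · simp
  · simp
  · module
  · ext (v | e) w <;> simp [vecMulVec_apply]
  · ext w (v | e) <;> simp [vecMulVec_apply]
  · module

lemma eval_charpoly_Aalpha_rEdgeJoin {α x : ℝ}
    (hx : ((x - α * Fintype.card G₁.edgeSet) • (1 : Matrix V₂ V₂ ℝ) - Aalpha G₂ α).det ≠ 0) :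
    (Aalpha (rEdgeJoin G₁ G₂) α).charpoly.eval x =
      (Aalpha G₂ α).charpoly.eval (x - α * Fintype.card G₁.edgeSet) *
        (fromBlocks (x • 1 - (Aalpha G₁ α + α • G₁.degMatrix ℝ)) (-((1 - α) • edgeIncMatrix G₁))
          (-((1 - α) • (edgeIncMatrix G₁)ᵀ))
          ((x - 2 * α - α * Fintype.card V₂) • 1 -
            ((1 - α) ^ 2 * coronal (Aalpha G₂ α) (x - α * Fintype.card G₁.edgeSet)) •
              vecMulVec 1 1)).det := by
  have hrank (g : ℝ) : g • vecMulVec (Sum.elim 0 ((α - 1) • 1)) (Sum.elim 0 ((α - 1) • 1)) =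
      fromBlocks (0 : Matrix V₁ V₁ ℝ) 0 0
        (((1 - α) ^ 2 * g) • vecMulVec (1 : G₁.edgeSet → ℝ) (1 : G₁.edgeSet → ℝ)) := by
    ext (v | e) (v' | e') <;> simp [vecMulVec_apply, mul_comm, ← sq, sub_sq_comm α]
  simp only [eval_charpoly, scalar_apply, ← smul_one_eq_diagonal]
  rw [← det_submatrix_equiv_self (Equiv.sumAssoc _ _ _),
    smul_one_sub_Aalpha_rEdgeJoin_submatrix, det_fromBlocks_vecMulVec _ _ _ _ _ _
      (isUnit_iff_ne_zero.2 hx), ← coronal_eq_dotProduct, hrank, fromBlocks_sub_fromBlocks,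
    sub_zero, sub_zero, sub_zero]

lemma det_fromBlocks_edgeIncMatrix {G : SimpleGraph V₁} {r : ℕ} (hreg : G.IsRegularOfDegree r)
    (α x : ℝ) {c : ℝ} (hc : c ≠ 0) (g : ℝ) :
    (fromBlocks (x • 1 - (Aalpha G α + α • G.degMatrix ℝ)) (-((1 - α) • edgeIncMatrix G))
      (-((1 - α) • (edgeIncMatrix G)ᵀ)) (c • 1 - ((1 - α) ^ 2 * g) • vecMulVec 1 1)).det =
      c ^ ((Fintype.card G.edgeSet : ℤ) - Fintype.card V₁) *
        ((c * (x - α * r) - (1 - α) * (1 - 2 * α) * r) • 1 -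
          ((c + 1 - α) • Aalpha G α +
            vecMulVec 1 (((1 - α) ^ 2 * g * (x - α * r - r) * (r / 2)) • 1))).det := by
  have hdeg := degMatrix_of_isRegularOfDegree hreg
  have hR := edgeIncMatrix_mulVec_one_of_isRegularOfDegree hreg
  set P := x • 1 - (Aalpha G α + α • G.degMatrix ℝ) with hP
  have hP1 : P *ᵥ 1 = (x - α * r - r) • 1 := by
    rw [sub_mulVec, add_mulVec, Aalpha_mulVec_one_of_isRegularOfDegree hreg, hdeg]
    simp only [smul_mulVec, one_mulVec]
    module
  have hRT : -((1 - α) • (edgeIncMatrix G)ᵀ) *ᵥ 1 = (-(2 * (1 - α))) • 1 := by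
    rw [neg_mulVec, smul_mulVec, edgeIncMatrix_transpose_mulVec_one]
    ext
    simp [mul_comm]
  have hvR : (((1 - α) * g / 2) • 1) ᵥ* -((1 - α) • (edgeIncMatrix G)ᵀ) =
      (-((1 - α) ^ 2 * g * (r / 2))) • 1 := by
    rw [vecMul_neg, vecMul_smul, smul_vecMul, vecMul_transpose, hR]
    module
  have hJ : c • (1 : Matrix G.edgeSet G.edgeSet ℝ) - ((1 - α) ^ 2 * g) • vecMulVec 1 1 =
      c • 1 + vecMulVec ((-(2 * (1 - α))) • 1) (((1 - α) * g / 2) • 1) := by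
    rw [smul_vecMulVec, vecMulVec_smul]
    module
  have hRR : -((1 - α) • edgeIncMatrix G) * -((1 - α) • (edgeIncMatrix G)ᵀ) =
      (1 - α) • (Aalpha G α + ((1 - 2 * α) * r) • 1) := by
    rw [Matrix.neg_mul, Matrix.mul_neg, neg_neg, smul_mul, Matrix.mul_smul,
      smul_edgeIncMatrix_mul_transpose, hdeg, smul_smul]
  have hschur : P - c⁻¹ • ((1 - α) • (Aalpha G α + ((1 - 2 * α) * r) • 1) -
      (x - α * r - r) • vecMulVec 1 ((-((1 - α) ^ 2 * g * (r / 2))) • 1)) =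
      c⁻¹ • ((c * (x - α * r) - (1 - α) * (1 - 2 * α) * r) • 1 -
        ((c + 1 - α) • Aalpha G α +
          vecMulVec 1 (((1 - α) ^ 2 * g * (x - α * r - r) * (r / 2)) • 1))) := by
    rw [hP, hdeg, vecMulVec_smul, vecMulVec_smul]
    match_scalars <;> field_simp
    ring
  rw [hJ, det_fromBlocks_smul_one_add_vecMulVec _ hc hP1 hRT, hRR, hvR, hschur, det_smul, inv_pow,
    zpow_sub₀ hc, zpow_natCast, zpow_natCast]
  ring

theorem Aalpha_charpoly_rEdgeJoin_general {r : ℕ} (hreg : G₁.IsRegularOfDegree r) (α : ℝ)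
    {μ : V₁ → ℝ} (hμch : (Aalpha G₁ α).charpoly = ∏ i, (X - C (μ i))) {i₀ : V₁} (hi₀ : μ i₀ = r)
    {x : ℝ} (hx₁ : ((x - α * Fintype.card G₁.edgeSet) • (1 : Matrix V₂ V₂ ℝ) -
      Aalpha G₂ α).det ≠ 0)
    (hx₂ : x ≠ 2 * α + α * Fintype.card V₂) :
    (Aalpha (rEdgeJoin G₁ G₂) α).charpoly.eval x =
      (x - 2 * α - α * Fintype.card V₂) ^
          ((Fintype.card G₁.edgeSet : ℤ) - (Fintype.card V₁ : ℤ)) *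
        (Aalpha G₂ α).charpoly.eval (x - α * Fintype.card G₁.edgeSet) *
        (∏ i ∈ Finset.univ.erase i₀,
          (x ^ 2 - (2 * α + α * r + α * Fintype.card V₂ + μ i) * x
            + α ^ 2 * r * Fintype.card V₂ + 3 * α * r - r
            - (1 - 3 * α - α * Fintype.card V₂) * μ i)) *
        (x ^ 2 - (2 * α + α * r + α * Fintype.card V₂ + r) * x
          + α ^ 2 * r * Fintype.card V₂ + 6 * α * r - 2 * r + α * r * Fintype.card V₂
          - Fintype.card G₁.edgeSet * (1 - α) ^ 2 * (x - α * r - r) *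
            coronal (Aalpha G₂ α) (x - α * Fintype.card G₁.edgeSet)) := by
  have hc : x - 2 * α - α * Fintype.card V₂ ≠ 0 := by
    rwa [sub_sub, sub_ne_zero]
  have hone : Aalpha G₁ α *ᵥ 1 = μ i₀ • 1 := by
    rw [hi₀, Aalpha_mulVec_one_of_isRegularOfDegree hreg]
  have hshake : (Fintype.card V₁ : ℝ) * r = 2 * Fintype.card G₁.edgeSet := by
    have hsum := G₁.sum_degrees_eq_twice_card_edges
    simp only [hreg.degree_eq, Finset.sum_const, Finset.card_univ, smul_eq_mul,
      SimpleGraph.edgeFinset_card] at hsum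
    exact_mod_cast hsum
  rw [eval_charpoly_Aalpha_rEdgeJoin G₁ G₂ hx₁, det_fromBlocks_edgeIncMatrix hreg α x hc,
    det_smul_one_sub_of_charpoly_eq_prod hμch hone, mul_left_comm, ← mul_assoc, ← mul_assoc, hi₀,
    smul_dotProduct, one_dotProduct_one, smul_eq_mul]
  congr 1
  · congr 1
    refine Finset.prod_congr rfl fun i _ => ?_
    ring
  · linear_combination (-(1 - α) ^ 2 * coronal (Aalpha G₂ α) (x - α * Fintype.card G₁.edgeSet) *
      (x - α * r - r) / 2) * hshake

end REdgeJoin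

/-- Theorem 6.1: the `A_α`-characteristic polynomial of the `R`-edge join `G₁⟨e⟩G₂`
of an `r₁`-regular graph `G₁` (on `n₁` vertices and `m₁` edges) and an arbitrary graph
`G₂` (on `n₂` vertices). -/
theorem Aalpha_charpoly_rEdgeJoin
    {n₁ m₁ n₂ r₁ : ℕ} (G₁ : SimpleGraph (Fin n₁)) (G₂ : SimpleGraph (Fin n₂))
    (hconn : G₁.Connected) (hreg : G₁.IsRegularOfDegree r₁)
    (hm : Fintype.card G₁.edgeSet = m₁)
    (α : ℝ) (hα : α ∈ Set.Icc (0 : ℝ) 1)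
    (μ : Fin n₁ → ℝ) (hμ : Antitone μ)
    (hμch : (Aalpha G₁ α).charpoly = ∏ i, (X - C (μ i)))
    (x : ℝ)
    (hx₁ : ((x - α * m₁) • (1 : Matrix (Fin n₂) (Fin n₂) ℝ) - Aalpha G₂ α).det ≠ 0)
    (hx₂ : x ≠ 2 * α + α * n₂) :
    ((Aalpha (rEdgeJoin G₁ G₂) α).charpoly).eval x =
      (x - 2 * α - α * n₂) ^ ((m₁ : ℤ) - (n₁ : ℤ)) *
        ((Aalpha G₂ α).charpoly).eval (x - α * m₁) *
        (∏ i ∈ Finset.univ.filter (fun i : Fin n₁ => i.val ≠ 0),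
          (x ^ 2 - (2 * α + α * r₁ + α * n₂ + μ i) * x
            + α ^ 2 * r₁ * n₂ + 3 * α * r₁ - r₁ - (1 - 3 * α - α * n₂) * μ i)) *
        (x ^ 2 - (2 * α + α * r₁ + α * n₂ + r₁) * x
          + α ^ 2 * r₁ * n₂ + 6 * α * r₁ - 2 * r₁ + α * r₁ * n₂
          - m₁ * (1 - α) ^ 2 * (x - α * r₁ - r₁) * coronal (Aalpha G₂ α) (x - α * m₁)) := by
  have : NeZero n₁ := ⟨Fin.pos_iff_nonempty.2 hconn.nonempty |>.ne'⟩
  have hμ₀ : μ 0 = r₁ := apply_zero_eq_of_charpoly_Aalpha hα hreg hμ hμch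
  have herase : Finset.univ.filter (fun i : Fin n₁ => i.val ≠ 0) = Finset.univ.erase 0 := by
    ext i
    simp
  subst hm
  rw [herase]
  simpa only [Fintype.card_fin] using
    Aalpha_charpoly_rEdgeJoin_general G₁ G₂ hreg α hμch hμ₀ hx₁ (by simpa using hx₂)
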